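/- arXiv:1504.03389 — 6 statements merged into one kernel-verified Lean document; each statement's English description precedes it below -/
import Mathlib

section
/- Under the point-mass contaminated model F = (1−ε)F₀ + ε δ_{K e₁}, for every unit vector u ∈ ℝ^p with s = u₁² (u₁ the first coordinate of u), the fourth central moment of the projection y = ⟨u, x⟩ under F equals a + b s K² + c s² K⁴, where a = (1−ε)A, b = 6ε²(1−ε), and c = ε(1 − 4ε + 6ε² − 3ε³). -/
open MeasureTheory
open scoped RealInnerProductSpace ENNReal

/-- Under the point-mass contaminated model `F = (1−ε)F₀ + ε δ_{K e₁}`, the fourth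
central moment of the projection `y = ⟪u, x⟫` of a unit vector `u` with `s = u₁²` equals
`a + b s K² + c s² K⁴`, where `a = (1−ε)A`, `b = 6ε²(1−ε)` and
`c = ε(1 − 4ε + 6ε² − 3ε³)`. -/
theorem contaminated_projection_fourth_central_moment {p : ℕ} (hp : 0 < p)
    (F₀ : Measure (EuclideanSpace ℝ (Fin p))) [IsProbabilityMeasure F₀]
    (hrot : ∀ T : EuclideanSpace ℝ (Fin p) ≃ₗᵢ[ℝ] EuclideanSpace ℝ (Fin p),
      Measure.map (⇑T) F₀ = F₀)
    (hmom : Integrable (fun x => ‖x‖ ^ 4) F₀)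
    (hcov : ∫ x, (x ⟨0, hp⟩) ^ 2 ∂F₀ = 1)
    (A : ℝ) (hA : A = ∫ x, (x ⟨0, hp⟩) ^ 4 ∂F₀)
    (ε K : ℝ) (hε : 0 < ε) (hε1 : ε < 1) (hK : 0 < K)
    (F : Measure (EuclideanSpace ℝ (Fin p)))
    (hF : F = ENNReal.ofReal (1 - ε) • F₀ +
      ENNReal.ofReal ε • Measure.dirac (K • EuclideanSpace.single (⟨0, hp⟩ : Fin p) 1))
    (u : EuclideanSpace ℝ (Fin p)) (hu : ‖u‖ = 1) :
    ∫ x, (⟪u, x⟫ - ∫ y, ⟪u, y⟫ ∂F) ^ 4 ∂F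
      = (1 - ε) * A + 6 * ε ^ 2 * (1 - ε) * (u ⟨0, hp⟩ ^ 2) * K ^ 2
        + ε * (1 - 4 * ε + 6 * ε ^ 2 - 3 * ε ^ 3) * (u ⟨0, hp⟩ ^ 2) ^ 2 * K ^ 4 := by
  
  classical
  set e : EuclideanSpace ℝ (Fin p) := EuclideanSpace.single (⟨0, hp⟩ : Fin p) 1 with he
  have hen : ‖e‖ = 1 := by simp [he]
  have hex : ∀ x : EuclideanSpace ℝ (Fin p), ⟪e, x⟫ = x ⟨0, hp⟩ := by
    intro x; simp [he, EuclideanSpace.inner_single_left]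
  have hue : ⟪u, K • e⟫ = K * u ⟨0, hp⟩ := by
    rw [real_inner_comm, real_inner_smul_left, hex]
  have hinv : ∀ (T : EuclideanSpace ℝ (Fin p) ≃ₗᵢ[ℝ] EuclideanSpace ℝ (Fin p))
      (f : EuclideanSpace ℝ (Fin p) → ℝ), Continuous f →
      ∫ x, f (T x) ∂F₀ = ∫ x, f x ∂F₀ := by
    intro T f hf
    conv_rhs => rw [← hrot T]
    rw [integral_map T.continuous.aemeasurable hf.aestronglyMeasurable]
  -- the reflection
  have hT : ∃ T : EuclideanSpace ℝ (Fin p) ≃ₗᵢ[ℝ] EuclideanSpace ℝ (Fin p), T u = e :=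
    ⟨(ℝ ∙ (u - e))ᗮ.reflection, Submodule.reflection_sub (by rw [hu, hen])⟩
  obtain ⟨T, hT⟩ := hT
  have hpow : ∀ n : ℕ, ∫ x, ⟪u, x⟫ ^ n ∂F₀ = ∫ x, (x ⟨0, hp⟩) ^ n ∂F₀ := by
    intro n
    rw [← hinv T (fun x => (x ⟨0, hp⟩) ^ n) (by fun_prop)]
    congr 1; ext x
    rw [← hex, ← hT, T.inner_map_map]
  have hodd : ∀ n : ℕ, Odd n → ∫ x, ⟪u, x⟫ ^ n ∂F₀ = 0 := by
    intro n hn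
    have h := hinv (LinearIsometryEquiv.neg ℝ) (fun x => ⟪u, x⟫ ^ n) (by fun_prop)
    simp only [LinearIsometryEquiv.coe_neg, inner_neg_right, hn.neg_pow, integral_neg] at h
    linarith
  have h1 := hodd 1 (by decide)
  have h3 := hodd 3 (by decide)
  have h2 := hpow 2
  have h4 := hpow 4
  rw [hcov] at h2
  rw [← hA] at h4
  have hint : ∀ n : ℕ, n ≤ 4 → Integrable (fun x => ⟪u, x⟫ ^ n) F₀ := by
    intro n hn
    refine ((integrable_const (1:ℝ)).add hmom).mono' (by fun_prop) (.of_forall fun x => ?_)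
    have h : |⟪u, x⟫| ≤ ‖x‖ := by simpa [hu] using abs_real_inner_le_norm u x
    rw [norm_pow, Real.norm_eq_abs]
    refine (pow_le_pow_left₀ (abs_nonneg _) h n).trans ?_
    have hx := norm_nonneg x
    simp only [Pi.add_apply]
    rcases le_total ‖x‖ 1 with hx1 | hx1
    · have := pow_le_one₀ hx hx1 (n := n)
      have := pow_nonneg hx 4
      linarith
    · have := pow_le_pow_right₀ hx1 hn
      linarith
  have hi1 := hint 1 (by norm_num)
  have hi2 := hint 2 (by norm_num)
  have hi3 := hint 3 (by norm_num)
  have hi4 := hint 4 (by norm_num)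
  have hFint : ∀ f : EuclideanSpace ℝ (Fin p) → ℝ, Integrable f F₀ →
      ∫ x, f x ∂F = (1 - ε) * ∫ x, f x ∂F₀ + ε * f (K • e) := by
    intro f hf
    rw [hF, integral_add_measure (hf.smul_measure ENNReal.ofReal_ne_top)
      ((integrable_dirac (by simp)).smul_measure ENNReal.ofReal_ne_top),
      integral_smul_measure, integral_smul_measure, integral_dirac,
      ENNReal.toReal_ofReal (by linarith), ENNReal.toReal_ofReal hε.le]
    simp
  simp only [pow_one] at h1 hi1
  rw [hFint _ hi1, h1, hue]
  set m : ℝ := (1 - ε) * 0 + ε * (K * u ⟨0, hp⟩) with hm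
  have hexp : (fun x : EuclideanSpace ℝ (Fin p) => (⟪u, x⟫ - m) ^ 4) = fun x =>
      ⟪u, x⟫ ^ 4 + ((-4 * m) * ⟪u, x⟫ ^ 3 + ((6 * m ^ 2) * ⟪u, x⟫ ^ 2 +
        ((-4 * m ^ 3) * ⟪u, x⟫ + m ^ 4))) := by
    ext x; ring
  have j1 := (hi1.const_mul (-4 * m ^ 3)).add (integrable_const (μ := F₀) (m ^ 4))
  have j2 := (hi2.const_mul (6 * m ^ 2)).add j1
  have j3 := (hi3.const_mul (-4 * m)).add j2
  have j4 := hi4.add j3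
  have hval : ∫ x, (⟪u, x⟫ - m) ^ 4 ∂F₀ = A + 6 * m ^ 2 + m ^ 4 := by
    rw [hexp]
    erw [integral_add hi4 j3, integral_add (hi3.const_mul (-4 * m)) j2,
      integral_add (hi2.const_mul (6 * m ^ 2)) j1,
      integral_add (hi1.const_mul (-4 * m ^ 3)) (integrable_const _)]
    simp only [integral_const_mul, h1, h2, h3, h4, integral_const]
    simp
    ring
  rw [hFint _ (by rw [hexp]; exact j4), hval, hue, hm]
  ring
end

section
/- Under the point-mass contaminated model F = (1−ε)F₀ + ε δ_{K e₁}, for every unit vector u ∈ ℝ^p with s = u₁² (u₁ the first coordinate of u), the kurtosis of the projection y = ⟨u, x⟩ under F (the fourth central moment divided by the squared variance) equals g(s) = (a + b s K² + c s² K⁴) / ((1−ε)² (1 + ε s K²)²), where a = (1−ε)A, b = 6ε²(1−ε), and c = ε(1 − 4ε + 6ε² − 3ε³); in particular the kurtosis of ⟨u, x⟩ under F depends on u only through s = u₁². -/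
open MeasureTheory
open scoped RealInnerProductSpace ENNReal

lemma aux_rot {p : ℕ} (hp : 0 < p)
    (F₀ : Measure (EuclideanSpace ℝ (Fin p)))
    (hrot : ∀ T : EuclideanSpace ℝ (Fin p) ≃ₗᵢ[ℝ] EuclideanSpace ℝ (Fin p),
      Measure.map (⇑T) F₀ = F₀)
    (u : EuclideanSpace ℝ (Fin p)) (hu : ‖u‖ = 1) (f : ℝ → ℝ) :
    ∫ x, f ⟪u, x⟫ ∂F₀ = ∫ x, f (x ⟨0, hp⟩) ∂F₀ := by
  set e : EuclideanSpace ℝ (Fin p) := EuclideanSpace.single (⟨0, hp⟩ : Fin p) 1 with he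
  have hne : ‖u‖ = ‖e‖ := by simp [he, hu]
  let T : EuclideanSpace ℝ (Fin p) ≃ₗᵢ[ℝ] EuclideanSpace ℝ (Fin p) := (ℝ ∙ (u - e))ᗮ.reflection
  have hT : T u = e := Submodule.reflection_sub hne
  have h1 : ∀ x, ⟪u, x⟫ = (T x) ⟨0, hp⟩ := by
    intro x
    rw [← T.inner_map_map, hT, he, EuclideanSpace.inner_single_left]
    simp
  have hme : MeasurableEmbedding (⇑T) := T.toHomeomorph.measurableEmbedding
  simp_rw [h1]
  rw [← hme.integral_map (g := fun x : EuclideanSpace ℝ (Fin p) => f (x ⟨0, hp⟩)), hrot]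

lemma aux_neg {p : ℕ}
    (F₀ : Measure (EuclideanSpace ℝ (Fin p)))
    (hrot : ∀ T : EuclideanSpace ℝ (Fin p) ≃ₗᵢ[ℝ] EuclideanSpace ℝ (Fin p),
      Measure.map (⇑T) F₀ = F₀)
    (u : EuclideanSpace ℝ (Fin p)) (f : ℝ → ℝ) (hf : ∀ t, f (-t) = - f t) :
    ∫ x, f ⟪u, x⟫ ∂F₀ = 0 := by
  let T : EuclideanSpace ℝ (Fin p) ≃ₗᵢ[ℝ] EuclideanSpace ℝ (Fin p) := LinearIsometryEquiv.neg ℝ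
  have hme : MeasurableEmbedding (⇑T) := T.toHomeomorph.measurableEmbedding
  have h : ∫ x, f ⟪u, T x⟫ ∂F₀ = ∫ x, f ⟪u, x⟫ ∂F₀ := by
    rw [← hme.integral_map (g := fun x : EuclideanSpace ℝ (Fin p) => f ⟪u, x⟫), hrot]
  have h2 : ∀ x, f ⟪u, T x⟫ = - f ⟪u, x⟫ := by
    intro x
    rw [← hf, ← inner_neg_right]
    rfl
  simp_rw [h2] at h
  rw [integral_neg] at h
  linarith

lemma aux_int {p : ℕ}
    (F₀ : Measure (EuclideanSpace ℝ (Fin p))) [IsProbabilityMeasure F₀]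
    (hmom : Integrable (fun x => ‖x‖ ^ 4) F₀)
    (u : EuclideanSpace ℝ (Fin p)) (hu : ‖u‖ = 1) (k : ℕ) (hk : k ≤ 4) :
    Integrable (fun x => ⟪u, x⟫ ^ k) F₀ := by
  refine Integrable.mono' ((integrable_const (1 : ℝ)).add hmom)
    (by fun_prop : Continuous fun x => ⟪u, x⟫ ^ k).aestronglyMeasurable
    (Filter.Eventually.of_forall fun x => ?_)
  have h1 : |⟪u, x⟫| ≤ ‖x‖ := by simpa [hu] using abs_real_inner_le_norm u x
  simp only [norm_pow, Real.norm_eq_abs, Pi.add_apply]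
  refine (pow_le_pow_left₀ (abs_nonneg _) h1 k).trans ?_
  rcases le_total ‖x‖ 1 with h | h
  · have := pow_le_one₀ (n := k) (norm_nonneg x) h
    have : 0 ≤ ‖x‖ ^ 4 := by positivity
    linarith
  · have := pow_le_pow_right₀ h hk
    linarith

lemma aux_mix {p : ℕ} (F₀ : Measure (EuclideanSpace ℝ (Fin p)))
    (ε : ℝ) (hε : 0 < ε) (hε1 : ε < 1) (z : EuclideanSpace ℝ (Fin p))
    (f : EuclideanSpace ℝ (Fin p) → ℝ) (hf : Integrable f F₀) :
    ∫ x, f x ∂(ENNReal.ofReal (1 - ε) • F₀ + ENNReal.ofReal ε • Measure.dirac z)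
      = (1 - ε) * ∫ x, f x ∂F₀ + ε * f z := by
  rw [integral_add_measure (hf.smul_measure ENNReal.ofReal_ne_top)
    ((integrable_dirac (by simp)).smul_measure ENNReal.ofReal_ne_top),
    integral_smul_measure, integral_smul_measure, integral_dirac,
    ENNReal.toReal_ofReal (by linarith), ENNReal.toReal_ofReal hε.le]
  simp

/-- Under the point-mass contaminated model `F = (1−ε)F₀ + ε δ_{K e₁}`, the kurtosis of
the projection `y = ⟪u, x⟫` of a unit vector `u` with `s = u₁²` equals
`g(s) = (a + b s K² + c s² K⁴) / ((1−ε)² (1 + ε s K²)²)` with `a = (1−ε)A`,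
`b = 6ε²(1−ε)`, `c = ε(1 − 4ε + 6ε² − 3ε³)`; in particular the kurtosis depends on `u`
only through `s = u₁²`. -/
theorem contaminated_projection_kurtosis {p : ℕ} (hp : 0 < p)
    (F₀ : Measure (EuclideanSpace ℝ (Fin p))) [IsProbabilityMeasure F₀]
    (hrot : ∀ T : EuclideanSpace ℝ (Fin p) ≃ₗᵢ[ℝ] EuclideanSpace ℝ (Fin p),
      Measure.map (⇑T) F₀ = F₀)
    (hmom : Integrable (fun x => ‖x‖ ^ 4) F₀)
    (hcov : ∫ x, (x ⟨0, hp⟩) ^ 2 ∂F₀ = 1)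
    (A : ℝ) (hA : A = ∫ x, (x ⟨0, hp⟩) ^ 4 ∂F₀)
    (ε K : ℝ) (hε : 0 < ε) (hε1 : ε < 1) (hK : 0 < K)
    (F : Measure (EuclideanSpace ℝ (Fin p)))
    (hF : F = ENNReal.ofReal (1 - ε) • F₀ +
      ENNReal.ofReal ε • Measure.dirac (K • EuclideanSpace.single (⟨0, hp⟩ : Fin p) 1))
    (kurt : EuclideanSpace ℝ (Fin p) → ℝ)
    (hkurt : ∀ v, kurt v =
      (∫ x, (⟪v, x⟫ - ∫ y, ⟪v, y⟫ ∂F) ^ 4 ∂F) /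
        (∫ x, (⟪v, x⟫ - ∫ y, ⟪v, y⟫ ∂F) ^ 2 ∂F) ^ 2)
    (u : EuclideanSpace ℝ (Fin p)) (hu : ‖u‖ = 1) :
    kurt u = ((1 - ε) * A + 6 * ε ^ 2 * (1 - ε) * (u ⟨0, hp⟩ ^ 2) * K ^ 2
        + ε * (1 - 4 * ε + 6 * ε ^ 2 - 3 * ε ^ 3) * (u ⟨0, hp⟩ ^ 2) ^ 2 * K ^ 4) /
      ((1 - ε) ^ 2 * (1 + ε * (u ⟨0, hp⟩ ^ 2) * K ^ 2) ^ 2) ∧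
    ∀ w : EuclideanSpace ℝ (Fin p), ‖w‖ = 1 → w ⟨0, hp⟩ ^ 2 = u ⟨0, hp⟩ ^ 2 →
      kurt w = kurt u := by
  have key : ∀ v : EuclideanSpace ℝ (Fin p), ‖v‖ = 1 →
      kurt v = ((1 - ε) * A + 6 * ε ^ 2 * (1 - ε) * (v ⟨0, hp⟩ ^ 2) * K ^ 2
        + ε * (1 - 4 * ε + 6 * ε ^ 2 - 3 * ε ^ 3) * (v ⟨0, hp⟩ ^ 2) ^ 2 * K ^ 4) /
      ((1 - ε) ^ 2 * (1 + ε * (v ⟨0, hp⟩ ^ 2) * K ^ 2) ^ 2) := by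
    intro v hv
    have i1 : Integrable (fun x => ⟪v, x⟫) F₀ := by
      simpa using aux_int F₀ hmom v hv 1 (by norm_num)
    have i2 := aux_int F₀ hmom v hv 2 (by norm_num)
    have i3 := aux_int F₀ hmom v hv 3 (by norm_num)
    have i4 := aux_int F₀ hmom v hv 4 (by norm_num)
    have m1 : ∫ x, ⟪v, x⟫ ∂F₀ = 0 := aux_neg F₀ hrot v (fun t => t) (fun t => rfl)
    have m3 : ∫ x, ⟪v, x⟫ ^ 3 ∂F₀ = 0 :=
      aux_neg F₀ hrot v (fun t => t ^ 3) (fun t => by ring)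
    have m2 : ∫ x, ⟪v, x⟫ ^ 2 ∂F₀ = 1 := by
      rw [← hcov]; exact aux_rot hp F₀ hrot v hv (fun t => t ^ 2)
    have m4 : ∫ x, ⟪v, x⟫ ^ 4 ∂F₀ = A := by
      rw [hA]; exact aux_rot hp F₀ hrot v hv (fun t => t ^ 4)
    have hz : ⟪v, K • EuclideanSpace.single (⟨0, hp⟩ : Fin p) (1 : ℝ)⟫ = K * v ⟨0, hp⟩ := by
      rw [inner_smul_right, EuclideanSpace.inner_single_right]; simp
    have hm : ∫ y, ⟪v, y⟫ ∂F = ε * (K * v ⟨0, hp⟩) := by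
      rw [hF, aux_mix F₀ ε hε hε1 _ _ i1, m1, hz]; ring
    rw [hkurt, hm]
    set t := v ⟨0, hp⟩ with ht
    generalize hmm : ε * (K * t) = m
    have e2 : (fun x => (⟪v, x⟫ - m) ^ 2) =
        fun x => ⟪v, x⟫ ^ 2 + ((-2 * m) * ⟪v, x⟫ + m ^ 2) := by
      funext x; ring
    have e4 : (fun x => (⟪v, x⟫ - m) ^ 4) =
        fun x => ⟪v, x⟫ ^ 4 + ((-4 * m) * ⟪v, x⟫ ^ 3 + ((6 * m ^ 2) * ⟪v, x⟫ ^ 2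
          + ((-4 * m ^ 3) * ⟪v, x⟫ + m ^ 4))) := by
      funext x; ring
    have ic : ∀ c : ℝ, Integrable (fun _ : EuclideanSpace ℝ (Fin p) => c) F₀ :=
      fun c => integrable_const c
    have j1 : ∀ c d : ℝ, Integrable (fun x => c * ⟪v, x⟫ + d) F₀ :=
      fun c d => (i1.const_mul c).add (ic d)
    have j2 : ∀ b c d : ℝ, Integrable (fun x => b * ⟪v, x⟫ ^ 2 + (c * ⟪v, x⟫ + d)) F₀ :=
      fun b c d => (i2.const_mul b).add (j1 c d)
    have j3 : ∀ a b c d : ℝ, Integrable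
        (fun x => a * ⟪v, x⟫ ^ 3 + (b * ⟪v, x⟫ ^ 2 + (c * ⟪v, x⟫ + d))) F₀ :=
      fun a b c d => (i3.const_mul a).add (j2 b c d)
    have k2 : Integrable (fun x => (⟪v, x⟫ - m) ^ 2) F₀ := by
      rw [e2]; exact i2.add (j1 _ _)
    have k4 : Integrable (fun x => (⟪v, x⟫ - m) ^ 4) F₀ := by
      rw [e4]; exact i4.add (j3 _ _ _ _)
    have c2 : ∫ x, (⟪v, x⟫ - m) ^ 2 ∂F₀ = 1 + m ^ 2 := by
      rw [e2, integral_add i2 (j1 _ _), integral_add (i1.const_mul _) (ic _),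
        integral_const_mul, m1, m2]
      simp
    have c4 : ∫ x, (⟪v, x⟫ - m) ^ 4 ∂F₀ = A + 6 * m ^ 2 + m ^ 4 := by
      rw [e4, integral_add i4 (j3 _ _ _ _), integral_add (i3.const_mul _) (j2 _ _ _),
        integral_add (i2.const_mul _) (j1 _ _), integral_add (i1.const_mul _) (ic _),
        integral_const_mul, integral_const_mul, integral_const_mul, m1, m2, m3, m4]
      simp
      ring
    rw [hF, aux_mix F₀ ε hε hε1 _ _ k2, aux_mix F₀ ε hε hε1 _ _ k4, c2, c4, hz, ← hmm]
    congr 1 <;> ring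
  refine ⟨key u hu, fun w hw hwu => ?_⟩
  rw [key w hw, key u hu, hwu]
end

section
/- If 1/3 ≤ ε < 1/2 and A > 3/2, then the function g(s) = ((1−ε)A + 6ε²(1−ε) K² s + ε(1−4ε+6ε²−3ε³) K⁴ s²) / ((1−ε)²(1 + ε K² s)²) satisfies g′(s) < 0 for all s ≥ 0; consequently g is strictly decreasing on [0, 1]. -/
/-- If `1/3 ≤ ε < 1/2` and `A > 3/2`, then the kurtosis function
`g(s) = ((1−ε)A + 6ε²(1−ε)K²s + ε(1−4ε+6ε²−3ε³)K⁴s²) / ((1−ε)²(1+εK²s)²)` has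
`g′(s) < 0` for all `s ≥ 0`; consequently `g` is strictly decreasing on `[0, 1]`. -/
theorem kurtosis_function_strictAnti (ε K A : ℝ)
    (hε : 0 < ε) (hε1 : ε < 1) (hK : 0 < K)
    (hε3 : 1 / 3 ≤ ε) (hε2 : ε < 1 / 2) (hA : 3 / 2 < A)
    (g : ℝ → ℝ)
    (hg : ∀ s, g s = ((1 - ε) * A + 6 * ε ^ 2 * (1 - ε) * K ^ 2 * s
        + ε * (1 - 4 * ε + 6 * ε ^ 2 - 3 * ε ^ 3) * K ^ 4 * s ^ 2)
        / ((1 - ε) ^ 2 * (1 + ε * K ^ 2 * s) ^ 2)) :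
    (∀ s : ℝ, 0 ≤ s → deriv g s < 0) ∧ StrictAntiOn g (Set.Icc 0 1) := by
  have hd : ∀ s : ℝ, 0 ≤ s → HasDerivAt g
      (K ^ 2 * (2 * ε) * ((3 * ε - A) + (1 - 3 * ε) * (K ^ 2 * s))
        / ((1 - ε) * (1 + ε * K ^ 2 * s) ^ 3)) s := by
    intro s hs
    have h1 : (1 - ε) ≠ 0 := by linarith
    have h2 : (1 + ε * K ^ 2 * s) ≠ 0 := by positivity
    have hid := hasDerivAt_id' s
    have hN := ((hid.const_mul (6 * ε ^ 2 * (1 - ε) * K ^ 2)).const_add ((1 - ε) * A)).add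
      ((hid.pow 2).const_mul (ε * (1 - 4 * ε + 6 * ε ^ 2 - 3 * ε ^ 3) * K ^ 4))
    have hD := (((hid.const_mul (ε * K ^ 2)).const_add 1).pow 2).const_mul ((1 - ε) ^ 2)
    have hq := hN.div hD (mul_ne_zero (pow_ne_zero 2 h1) (pow_ne_zero 2 h2))
    have hgf : g = _ := funext hg
    rw [hgf]
    refine HasDerivAt.congr_deriv hq ?_
    simp only [Pi.add_apply, Pi.pow_apply]
    field_simp
    ring
  have hneg : ∀ s : ℝ, 0 ≤ s → deriv g s < 0 := by
    intro s hs
    rw [(hd s hs).deriv]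
    have h1 : 0 < 1 - ε := by linarith
    apply div_neg_of_neg_of_pos
    · apply mul_neg_of_pos_of_neg (by positivity)
      have : (1 - 3 * ε) * (K ^ 2 * s) ≤ 0 :=
        mul_nonpos_of_nonpos_of_nonneg (by linarith) (by positivity)
      linarith
    · positivity
  refine ⟨hneg, strictAntiOn_of_deriv_neg (convex_Icc 0 1) ?_ ?_⟩
  · intro s hs
    exact (hd s hs.1).continuousAt.continuousWithinAt
  · intro s hs
    exact hneg s (interior_subset hs).1
end

section
/- If 0 < ε < 1/3 and A > 3/2, then the function g(s) = ((1−ε)A + 6ε²(1−ε) K² s + ε(1−4ε+6ε²−3ε³) K⁴ s²) / ((1−ε)²(1 + ε K² s)²) has a unique critical point s* = (A − 3ε)/((1 − 3ε) K²) > 0 in (0, ∞); g is strictly decreasing on [0, s*] and strictly increasing on [s*, ∞). In particular g has no local maximum in the open interval (0, 1), and the maximum of g over [0, 1] is attained at s = 0 or at s = 1. -/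
/-- If `0 < ε < 1/3` and `A > 3/2`, then the kurtosis function
`g(s) = ((1−ε)A + 6ε²(1−ε)K²s + ε(1−4ε+6ε²−3ε³)K⁴s²) / ((1−ε)²(1+εK²s)²)` has a unique
critical point `s* = (A − 3ε)/((1 − 3ε)K²) > 0` in `(0, ∞)`, is strictly decreasing on
`[0, s*]` and strictly increasing on `[s*, ∞)`; in particular `g` has no local maximum
in `(0, 1)` and the maximum of `g` over `[0, 1]` is attained at `0` or at `1`. -/
theorem kurtosis_function_unique_critical_point (ε K A : ℝ)
    (hε : 0 < ε) (hε3 : ε < 1 / 3) (hK : 0 < K) (hA : 3 / 2 < A)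
    (g : ℝ → ℝ)
    (hg : ∀ s, g s = ((1 - ε) * A + 6 * ε ^ 2 * (1 - ε) * K ^ 2 * s
        + ε * (1 - 4 * ε + 6 * ε ^ 2 - 3 * ε ^ 3) * K ^ 4 * s ^ 2)
        / ((1 - ε) ^ 2 * (1 + ε * K ^ 2 * s) ^ 2))
    (sstar : ℝ) (hsstar : sstar = (A - 3 * ε) / ((1 - 3 * ε) * K ^ 2)) :
    0 < sstar ∧
    (∀ s : ℝ, 0 < s → (deriv g s = 0 ↔ s = sstar)) ∧
    StrictAntiOn g (Set.Icc 0 sstar) ∧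
    StrictMonoOn g (Set.Ici sstar) ∧
    (∀ s ∈ Set.Ioo (0 : ℝ) 1, ¬ IsLocalMax g s) ∧
    (∀ s ∈ Set.Icc (0 : ℝ) 1, g s ≤ max (g 0) (g 1)) := by
  have h1 : 0 < 1 - ε := by linarith
  have h3 : 0 < 1 - 3 * ε := by linarith
  have hA3 : 0 < A - 3 * ε := by linarith
  have hs0 : 0 < sstar := by rw [hsstar]; positivity
  have hder : ∀ s : ℝ, 0 ≤ s → HasDerivAt g
      (2 * ε * K ^ 4 * (1 - 3 * ε) / ((1 - ε) * (1 + ε * K ^ 2 * s) ^ 3) * (s - sstar)) s := by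
    intro s hs
    have hp : 0 < 1 + ε * K ^ 2 * s := by positivity
    have hgf : g = fun s => ((1 - ε) * A + 6 * ε ^ 2 * (1 - ε) * K ^ 2 * s
        + ε * (1 - 4 * ε + 6 * ε ^ 2 - 3 * ε ^ 3) * K ^ 4 * s ^ 2)
        / ((1 - ε) ^ 2 * (1 + ε * K ^ 2 * s) ^ 2) := funext hg
    have hN : HasDerivAt (fun s : ℝ => (1 - ε) * A + 6 * ε ^ 2 * (1 - ε) * K ^ 2 * s
        + ε * (1 - 4 * ε + 6 * ε ^ 2 - 3 * ε ^ 3) * K ^ 4 * s ^ 2)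
        (6 * ε ^ 2 * (1 - ε) * K ^ 2 * 1
        + ε * (1 - 4 * ε + 6 * ε ^ 2 - 3 * ε ^ 3) * K ^ 4 * (2 * s)) s := by
      have h2 : HasDerivAt (fun s : ℝ => s ^ 2) (2 * s) s := by
        simpa using hasDerivAt_pow 2 s
      exact (((hasDerivAt_id' s).const_mul _).const_add _).add (h2.const_mul _)
    have hD : HasDerivAt (fun s : ℝ => (1 - ε) ^ 2 * (1 + ε * K ^ 2 * s) ^ 2)
        ((1 - ε) ^ 2 * (2 * (1 + ε * K ^ 2 * s) * (ε * K ^ 2 * 1))) s := by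
      have h2 := (((hasDerivAt_id' s).const_mul (ε * K ^ 2)).const_add 1).pow 2
      have h4 := h2.const_mul ((1 - ε) ^ 2)
      refine h4.congr_deriv ?_
      simp
    rw [hgf]
    refine (hN.div hD (by positivity)).congr_deriv ?_
    have hAe : A = sstar * ((1 - 3 * ε) * K ^ 2) + 3 * ε := by
      have h6 : sstar * ((1 - 3 * ε) * K ^ 2) = A - 3 * ε := by
        rw [hsstar]
        exact div_mul_cancel₀ _ (by positivity)
      linarith
    rw [hAe]
    have hp' := hp.ne'
    have h1' := h1.ne'
    have h3' := h3.ne'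
    have hK' := hK.ne'
    field_simp
    ring
  have hc : ∀ s : ℝ, 0 ≤ s →
      0 < 2 * ε * K ^ 4 * (1 - 3 * ε) / ((1 - ε) * (1 + ε * K ^ 2 * s) ^ 3) := by
    intro s hs
    positivity
  have hcrit : ∀ s : ℝ, 0 < s → (deriv g s = 0 ↔ s = sstar) := by
    intro s hs
    rw [(hder s hs.le).deriv, mul_eq_zero, sub_eq_zero]
    exact or_iff_right (hc s hs.le).ne'
  have hanti : StrictAntiOn g (Set.Icc 0 sstar) := by
    apply strictAntiOn_of_deriv_neg (convex_Icc _ _)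
    · intro x hx
      exact (hder x hx.1).continuousAt.continuousWithinAt
    · intro x hx
      rw [interior_Icc] at hx
      rw [(hder x hx.1.le).deriv]
      exact mul_neg_of_pos_of_neg (hc x hx.1.le) (sub_neg.2 hx.2)
  have hmono : StrictMonoOn g (Set.Ici sstar) := by
    apply strictMonoOn_of_deriv_pos (convex_Ici _)
    · intro x hx
      exact (hder x (hs0.le.trans hx)).continuousAt.continuousWithinAt
    · intro x hx
      rw [interior_Ici] at hx
      have hx0 : 0 ≤ x := hs0.le.trans (le_of_lt hx)
      rw [(hder x hx0).deriv]
      exact mul_pos (hc x hx0) (sub_pos.2 hx)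
  refine ⟨hs0, hcrit, hanti, hmono, ?_, ?_⟩
  · intro s hs hmax
    have hse := (hcrit s hs.1).1 hmax.deriv_eq_zero
    subst hse
    have h5 : ∀ᶠ y in nhdsWithin s (Set.Ioi s), g y ≤ g s :=
      hmax.filter_mono nhdsWithin_le_nhds
    obtain ⟨y, hy, hys⟩ := (h5.and self_mem_nhdsWithin).exists
    have hys' : s < y := hys
    exact absurd (hmono (Set.mem_Ici.2 le_rfl) (Set.mem_Ici.2 hys'.le) hys') (not_lt.2 hy)
  · intro s hs
    rcases le_total s sstar with h | h
    · exact le_max_of_le_left (hanti.antitoneOn ⟨le_rfl, hs0.le⟩ ⟨hs.1, h⟩ hs.1)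
    · exact le_max_of_le_right
        (hmono.monotoneOn (Set.mem_Ici.2 h) (Set.mem_Ici.2 (h.trans hs.2)) hs.2)
end

section
/- Let x₁, …, xₙ ∈ ℝ^p, let Σ be a positive definite p×p real matrix, and set dᵢ(μ) = (xᵢ − μ)ᵀ Σ⁻¹ (xᵢ − μ) for μ ∈ ℝ^p. Let ρ : ℝ → ℝ be differentiable with derivative W = ρ′, let δ ∈ (0,1), and let S : ℝ^p → ℝ be a differentiable function with S(μ) > 0 for all μ that satisfies the M-scale identity (1/n) ∑ᵢ ρ( dᵢ(μ) / S(μ) ) = δ for every μ ∈ ℝ^p. If μ̂ is a local minimum of S, then the location estimating equation ∑ᵢ W( dᵢ(μ̂) / S(μ̂) ) (xᵢ − μ̂) = 0 holds. -/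
open MeasureTheory

/-- Let `x₁, …, xₙ ∈ ℝ^p`, `Σ` positive definite, and `dᵢ(μ) = (xᵢ − μ)ᵀ Σ⁻¹ (xᵢ − μ)`
the squared Mahalanobis distances. Let `ρ` be differentiable with derivative `W`, and
let `S` be a positive differentiable function satisfying the M-scale identity
`(1/n) ∑ᵢ ρ(dᵢ(μ)/S(μ)) = δ` for all `μ`. If `μ̂` is a local minimum of `S`, then the
location estimating equation `∑ᵢ W(dᵢ(μ̂)/S(μ̂)) (xᵢ − μ̂) = 0` holds. -/
theorem local_min_of_Mscale_satisfies_estimating_equation {p n : ℕ} (hn : 0 < n)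
    (x : Fin n → EuclideanSpace ℝ (Fin p))
    (Cov : Matrix (Fin p) (Fin p) ℝ) (hCov : Cov.PosDef)
    (d : EuclideanSpace ℝ (Fin p) → Fin n → ℝ)
    (hd : ∀ μ i, d μ i = ∑ j, ∑ k, (x i j - μ j) * Cov⁻¹ j k * (x i k - μ k))
    (ρ W : ℝ → ℝ) (hρ : ∀ t, HasDerivAt ρ (W t) t)
    (δ : ℝ) (hδ : δ ∈ Set.Ioo (0 : ℝ) 1)
    (S : EuclideanSpace ℝ (Fin p) → ℝ) (hS : Differentiable ℝ S)
    (hSpos : ∀ μ, 0 < S μ)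
    (hMscale : ∀ μ, (1 / n : ℝ) * ∑ i, ρ (d μ i / S μ) = δ)
    (μhat : EuclideanSpace ℝ (Fin p)) (hmin : IsLocalMin S μhat) :
    ∑ i, W (d μhat i / S μhat) • (x i - μhat) = 0 := by
  set w : Fin n → ℝ := fun i => W (d μhat i / S μhat) with hw
  set u : EuclideanSpace ℝ (Fin p) := ∑ i, w i • (x i - μhat) with hu
  have huj : ∀ j, u j = ∑ i, w i * (x i j - μhat j) := by
    intro j
    simp [hu]
  have hline : HasDerivAt (fun t : ℝ => μhat + t • u) u 0 := by
    simpa using ((hasDerivAt_id (0 : ℝ)).smul_const u).const_add μhat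
  have hS0 : HasDerivAt (fun t : ℝ => S (μhat + t • u)) 0 0 := by
    have h1 : HasFDerivAt S (fderiv ℝ S μhat) (μhat + (0 : ℝ) • u) := by
      simpa using (hS μhat).hasFDerivAt
    have h2 := h1.comp_hasDerivAt (0 : ℝ) hline
    rw [hmin.fderiv_eq_zero] at h2
    simpa [Function.comp_def] using h2
  have hd0 : ∀ i, HasDerivAt (fun t : ℝ => d (μhat + t • u) i)
      (∑ j, ∑ k, ((-u j) * Cov⁻¹ j k * (x i k - μhat k)
        + (x i j - μhat j) * Cov⁻¹ j k * (-u k))) 0 := by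
    intro i
    have hc : ∀ j, HasDerivAt (fun t : ℝ => x i j - (μhat + t • u) j) (-u j) 0 := by
      intro j
      have := (((hasDerivAt_id (0 : ℝ)).mul_const (u j)).const_add (μhat j)).const_sub (x i j)
      simpa using this
    simp only [hd]
    refine HasDerivAt.fun_sum fun j _ => HasDerivAt.fun_sum fun k _ => ?_
    have := ((hc j).mul_const (Cov⁻¹ j k)).fun_mul (hc k)
    simpa using this
  have hne : S μhat ≠ 0 := (hSpos μhat).ne'
  have hq : ∀ i, HasDerivAt (fun t : ℝ => ρ (d (μhat + t • u) i / S (μhat + t • u)))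
      (w i * ((∑ j, ∑ k, ((-u j) * Cov⁻¹ j k * (x i k - μhat k)
        + (x i j - μhat j) * Cov⁻¹ j k * (-u k))) / S μhat)) 0 := by
    intro i
    have h1 := (hd0 i).fun_div hS0 (by simpa using hne)
    have h2 := (hρ (d (μhat + (0 : ℝ) • u) i / S (μhat + (0 : ℝ) • u))).comp (0 : ℝ) h1
    refine h2.congr_deriv ?_
    simp only [zero_smul, add_zero, mul_zero, sub_zero, hw]
    congr 1
    field_simp
  have hsum := HasDerivAt.fun_sum (u := Finset.univ) fun i _ => hq i
  have hconst : (fun t : ℝ => ∑ i, ρ (d (μhat + t • u) i / S (μhat + t • u)))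
      = fun _ => n * δ := by
    funext t
    have hn' : (n : ℝ) ≠ 0 := by positivity
    rw [← hMscale (μhat + t • u)]
    field_simp
  rw [hconst] at hsum
  have h0 := hsum.unique (hasDerivAt_const (0 : ℝ) ((n : ℝ) * δ))
  have h1 : ∑ i, w i * (∑ j, ∑ k, ((-u j) * Cov⁻¹ j k * (x i k - μhat k)
        + (x i j - μhat j) * Cov⁻¹ j k * (-u k))) = 0 := by
    simp only [← mul_div_assoc] at h0
    rw [← Finset.sum_div] at h0
    exact (div_eq_zero_iff.mp h0).resolve_right hne
  have h2 : ∑ j, ∑ k, u j * Cov⁻¹ j k * u k = 0 := by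
    have h3 : ∑ i, w i * (∑ j, ∑ k, ((-u j) * Cov⁻¹ j k * (x i k - μhat k)
        + (x i j - μhat j) * Cov⁻¹ j k * (-u k)))
        = ∑ j, ∑ k, (-2) * (u j * Cov⁻¹ j k * u k) := by
      simp only [Finset.mul_sum]
      rw [Finset.sum_comm]
      refine Finset.sum_congr rfl fun j _ => ?_
      rw [Finset.sum_comm]
      refine Finset.sum_congr rfl fun k _ => ?_
      have e : ∀ i, w i * ((-u j) * Cov⁻¹ j k * (x i k - μhat k)
        + (x i j - μhat j) * Cov⁻¹ j k * (-u k)) =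
          (-u j * Cov⁻¹ j k) * (w i * (x i k - μhat k))
          + (-u k * Cov⁻¹ j k) * (w i * (x i j - μhat j)) := fun i => by ring
      simp only [e, Finset.sum_add_distrib, ← Finset.mul_sum, ← huj]
      ring
    rw [h3] at h1
    simp only [← Finset.mul_sum] at h1
    linarith
  by_contra hne0
  have hu0 : (fun j => u j) ≠ 0 := by
    intro h
    apply hne0
    ext j
    exact congrFun h j
  have hpos := hCov.inv.dotProduct_mulVec_pos hu0
  have : star (fun j => u j) ⬝ᵥ Cov⁻¹.mulVec (fun j => u j)
      = ∑ j, ∑ k, u j * Cov⁻¹ j k * u k := by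
    simp [dotProduct, Matrix.mulVec, Finset.mul_sum, mul_assoc]
  rw [this, h2] at hpos
  exact lt_irrefl _ hpos
end

section
/- Fix p ≥ 1 and a positive definite p×p real matrix Σ₀. If 1/3 ≤ ε < 1/2 and A > 3/2, then for all K with K² > A the kurtosis function g from the contaminated model is strictly monotone in s = u₁² on [0,1]: for any two unit vectors u, w ∈ ℝ^p with u₁² > w₁², the kurtosis of ⟨u, x⟩ under F = (1−ε)F₀ + ε δ_{K e₁} is strictly smaller than the kurtosis of ⟨w, x⟩ under F. -/
open MeasureTheory
open scoped RealInnerProductSpace ENNReal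

lemma aux_ineq (A ε a b : ℝ) (hA : 3/2 < A) (h3 : 1/3 ≤ ε) (h2 : ε < 1/2) (hb : 0 ≤ b) (hab : b < a) :
    (A + 6*ε^2*a + ε*(1-3*ε+3*ε^2)*a^2) / (1+ε*a)^2 <
    (A + 6*ε^2*b + ε*(1-3*ε+3*ε^2)*b^2) / (1+ε*b)^2 := by
  have he : 0 < ε := by linarith
  have ha : 0 < a := by linarith
  rw [div_lt_div_iff₀ (by positivity) (by positivity)]
  have h1 : 6*ε^2 - 2*ε*A < 0 := by nlinarith
  have h4 : (1-3*ε+3*ε^2) - ε*A ≤ 0 := by nlinarith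
  have h5 : (a+b)*ε*((1-3*ε+3*ε^2) - ε*A) ≤ 0 :=
    mul_nonpos_of_nonneg_of_nonpos (by positivity) h4
  have h6 : a*b*(2*ε^2)*(1-3*ε) ≤ 0 :=
    mul_nonpos_of_nonneg_of_nonpos (by positivity) (by linarith)
  have h7 : (a-b)*((6*ε^2 - 2*ε*A) + (a+b)*ε*((1-3*ε+3*ε^2) - ε*A) + a*b*(2*ε^2)*(1-3*ε)) < 0 :=
    mul_neg_of_pos_of_neg (by linarith) (by linarith)
  nlinarith [h7]

/-- Fix `p ≥ 1` and a positive definite `Σ₀`. Under the point-mass contaminated model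
`F = (1−ε)F₀ + ε δ_{K e₁}` with `1/3 ≤ ε < 1/2`, `A > 3/2` and `K² > A`, the kurtosis of
the projections is strictly monotone in `s = u₁²` on `[0, 1]`: for unit vectors `u, w`
with `u₁² > w₁²`, the kurtosis of `⟪u, x⟫` under `F` is strictly smaller than the
kurtosis of `⟪w, x⟫` under `F`. -/
theorem contaminated_kurtosis_strict_monotone {p : ℕ} (hp : 0 < p)
    (Sig₀ : Matrix (Fin p) (Fin p) ℝ) (hSig₀ : Sig₀.PosDef)
    (F₀ : Measure (EuclideanSpace ℝ (Fin p))) [IsProbabilityMeasure F₀]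
    (hrot : ∀ T : EuclideanSpace ℝ (Fin p) ≃ₗᵢ[ℝ] EuclideanSpace ℝ (Fin p),
      Measure.map (⇑T) F₀ = F₀)
    (hmom : Integrable (fun x => ‖x‖ ^ 4) F₀)
    (hcov : ∫ x, (x ⟨0, hp⟩) ^ 2 ∂F₀ = 1)
    (A : ℝ) (hA : A = ∫ x, (x ⟨0, hp⟩) ^ 4 ∂F₀) (hA2 : 3 / 2 < A)
    (ε K : ℝ) (hε3 : 1 / 3 ≤ ε) (hε2 : ε < 1 / 2) (hK : 0 < K) (hKA : A < K ^ 2)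
    (F : Measure (EuclideanSpace ℝ (Fin p)))
    (hF : F = ENNReal.ofReal (1 - ε) • F₀ +
      ENNReal.ofReal ε • Measure.dirac (K • EuclideanSpace.single (⟨0, hp⟩ : Fin p) 1))
    (kurt : EuclideanSpace ℝ (Fin p) → ℝ)
    (hkurt : ∀ v, kurt v =
      (∫ x, (⟪v, x⟫ - ∫ y, ⟪v, y⟫ ∂F) ^ 4 ∂F) /
        (∫ x, (⟪v, x⟫ - ∫ y, ⟪v, y⟫ ∂F) ^ 2 ∂F) ^ 2) :
    ∀ u w : EuclideanSpace ℝ (Fin p), ‖u‖ = 1 → ‖w‖ = 1 →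
      w ⟨0, hp⟩ ^ 2 < u ⟨0, hp⟩ ^ 2 → kurt u < kurt w := by
  have he0 : 0 < ε := by linarith
  have he1 : 0 < 1 - ε := by linarith
  set e : EuclideanSpace ℝ (Fin p) := EuclideanSpace.single (⟨0, hp⟩ : Fin p) 1 with hedef
  have hen : ‖e‖ = 1 := by simp [e]
  have hie : ∀ x : EuclideanSpace ℝ (Fin p), ⟪e, x⟫ = x ⟨0, hp⟩ := by
    intro x; simp [e, EuclideanSpace.inner_single_left]
  have hve : ∀ x : EuclideanSpace ℝ (Fin p), ⟪x, e⟫ = x ⟨0, hp⟩ := by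
    intro x; rw [real_inner_comm, hie]
  have hcv : ∀ (T : EuclideanSpace ℝ (Fin p) ≃ₗᵢ[ℝ] EuclideanSpace ℝ (Fin p))
      (f : EuclideanSpace ℝ (Fin p) → ℝ), Continuous f → ∫ x, f (T x) ∂F₀ = ∫ x, f x ∂F₀ := by
    intro T f hf
    conv_rhs => rw [← hrot T]
    rw [integral_map T.continuous.aemeasurable hf.aestronglyMeasurable]
  have hev : ∀ v : EuclideanSpace ℝ (Fin p), ‖v‖ = 1 → ∀ k : ℕ,
      ∫ x, ⟪v, x⟫ ^ k ∂F₀ = ∫ x, (x ⟨0, hp⟩) ^ k ∂F₀ := by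
    intro v hv k
    let T := (Submodule.span ℝ {v - e})ᗮ.reflection
    have hT : T v = e := Submodule.reflection_sub (by rw [hv, hen])
    rw [← hcv T (fun x => (x ⟨0, hp⟩) ^ k) (by fun_prop)]
    refine integral_congr_ae (Filter.Eventually.of_forall fun x => ?_)
    show ⟪v, x⟫ ^ k = (T x ⟨0, hp⟩) ^ k
    rw [← hie, ← hT, T.inner_map_map]
  have hodd : ∀ (v : EuclideanSpace ℝ (Fin p)) (k : ℕ), Odd k → ∫ x, ⟪v, x⟫ ^ k ∂F₀ = 0 := by
    intro v k hk
    have h := hcv (LinearIsometryEquiv.neg ℝ) (fun x => ⟪v, x⟫ ^ k) (by fun_prop)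
    simp only [LinearIsometryEquiv.coe_neg, inner_neg_right, hk.neg_pow, integral_neg] at h
    linarith
  have hint : ∀ v : EuclideanSpace ℝ (Fin p), ‖v‖ = 1 → ∀ k : ℕ, k ≤ 4 →
      Integrable (fun x => ⟪v, x⟫ ^ k) F₀ := by
    intro v hv k hk
    refine Integrable.mono' (hmom.add (integrable_const (1:ℝ)))
      (by fun_prop) (Filter.Eventually.of_forall fun x => ?_)
    have h1 : |⟪v, x⟫| ≤ ‖x‖ := by simpa [hv] using abs_real_inner_le_norm v x
    show ‖⟪v, x⟫ ^ k‖ ≤ ‖x‖ ^ 4 + 1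
    rw [norm_pow, Real.norm_eq_abs]
    have h2 : |⟪v, x⟫| ^ k ≤ ‖x‖ ^ k := pow_le_pow_left₀ (abs_nonneg _) h1 k
    rcases le_total ‖x‖ 1 with h | h
    · have := pow_le_one₀ (n := k) (norm_nonneg x) h
      have := pow_nonneg (norm_nonneg x) 4
      linarith
    · have := pow_le_pow_right₀ h hk
      linarith
  -- integrals under F
  have hFint : ∀ f : EuclideanSpace ℝ (Fin p) → ℝ, Integrable f F₀ →
      ∫ x, f x ∂F = (1 - ε) * ∫ x, f x ∂F₀ + ε * f (K • e) := by
    intro f hf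
    rw [hF, integral_add_measure (hf.smul_measure ENNReal.ofReal_ne_top)
      ((integrable_dirac (by simp)).smul_measure ENNReal.ofReal_ne_top),
      integral_smul_measure, integral_smul_measure, integral_dirac,
      ENNReal.toReal_ofReal he1.le, ENNReal.toReal_ofReal he0.le, smul_eq_mul, smul_eq_mul]
  have key : ∀ v : EuclideanSpace ℝ (Fin p), ‖v‖ = 1 → kurt v =
      (A + 6*ε^2*(K^2 * v ⟨0, hp⟩ ^ 2) + ε*(1-3*ε+3*ε^2)*(K^2 * v ⟨0, hp⟩ ^ 2)^2) /
        (1+ε*(K^2 * v ⟨0, hp⟩ ^ 2))^2 / (1 - ε) := by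
    intro v hv
    have i1 := hint v hv 1 (by norm_num)
    have i2 := hint v hv 2 (by norm_num)
    have i3 := hint v hv 3 (by norm_num)
    have i4 := hint v hv 4 (by norm_num)
    have m1 := hodd v 1 (by decide)
    have m3 := hodd v 3 (by decide)
    have m2 := (hev v hv 2).trans hcov
    have m4 := (hev v hv 4).trans hA.symm
    have hc : ⟪v, K • e⟫ = K * v ⟨0, hp⟩ := by rw [inner_smul_right, hve]
    have hmean : ∫ y, ⟪v, y⟫ ∂F = ε * (K * v ⟨0, hp⟩) := by
      simp only [pow_one] at i1 m1
      rw [hFint _ i1, m1, hc]; ring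
    rw [hkurt, hmean]
    set t := v ⟨0, hp⟩ with ht
    set m := ε * (K * t) with hm
    have e2 : ∀ x : EuclideanSpace ℝ (Fin p), (⟪v, x⟫ - m) ^ 2
        = ⟪v, x⟫ ^ 2 + (-2 * m) * ⟪v, x⟫ ^ 1 + m ^ 2 := fun x => by ring
    have e4 : ∀ x : EuclideanSpace ℝ (Fin p), (⟪v, x⟫ - m) ^ 4
        = ⟪v, x⟫ ^ 4 + (-4 * m) * ⟪v, x⟫ ^ 3 + (6 * m ^ 2) * ⟪v, x⟫ ^ 2
          + (-4 * m ^ 3) * ⟪v, x⟫ ^ 1 + m ^ 4 := fun x => by ring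
    have j1 := i1.const_mul (-2 * m)
    have j2 := i2.fun_add j1
    have j3 := j2.fun_add (integrable_const (m ^ 2))
    have V : ∫ x, (⟪v, x⟫ - m) ^ 2 ∂F = (1 - ε) * (1 + ε * (K^2 * t^2)) := by
      simp_rw [e2]
      rw [hFint _ j3, integral_add j2 (integrable_const _), integral_add i2 j1,
        integral_const_mul, m2, m1, hc]
      simp
      rw [hm]; ring
    have k1 := i3.const_mul (-4 * m)
    have k2 := i2.const_mul (6 * m ^ 2)
    have k3 := i1.const_mul (-4 * m ^ 3)
    have l1 := i4.fun_add k1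
    have l2 := l1.fun_add k2
    have l3 := l2.fun_add k3
    have l4 := l3.fun_add (integrable_const (m ^ 4))
    have W : ∫ x, (⟪v, x⟫ - m) ^ 4 ∂F = (1 - ε) *
        (A + 6*ε^2*(K^2 * t ^ 2) + ε*(1-3*ε+3*ε^2)*(K^2 * t ^ 2)^2) := by
      simp_rw [e4]
      rw [hFint _ l4, integral_add l3 (integrable_const _), integral_add l2 k3,
        integral_add l1 k2, integral_add i4 k1,
        integral_const_mul, integral_const_mul, integral_const_mul, m2, m1, m3, m4, hc]
      simp
      rw [hm]; ring
    rw [V, W]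
    have : 0 < 1 + ε * (K^2 * t^2) := by positivity
    field_simp
  intro u w hu hw huw
  rw [key u hu, key w hw]
  refine div_lt_div_of_pos_right ?_ he1
  exact aux_ineq A ε _ _ hA2 hε3 hε2 (by positivity) (mul_lt_mul_of_pos_left huw (by positivity))
end
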